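/- Let p ≥ 7 be a prime with p ≡ 3 (mod 4). Then in ℤ_(p)[i]: G_p(p) ≡ −(p⁵/12)·(p−1)²(p−2)·B_{p−3}·(1−i) (mod p⁶), where B_{p−3} is the (p−3)-rd Bernoulli number (p-integral since (p−1) ∤ (p−3)). In particular p⁵ divides G_p(p) in ℤ[i]. -/

import Mathlib

noncomputable section

/-- `i` in the Gaussian integers. -/
def Ig : GaussianInt := ⟨0, 1⟩

/-- Classical power sum `S_r(N) = ∑_{t=1}^N t^r`. -/
def Sps (r N : ℕ) : ℤ := ∑ t ∈ Finset.Icc 1 N, (t : ℤ) ^ r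

/-- Gaussian power sum `F_n(k,m) = ∑_{a=1}^k ∑_{b=1}^m (a+bi)^n`. -/
def Fg (n k m : ℕ) : GaussianInt :=
  ∑ a ∈ Finset.Icc 1 k, ∑ b ∈ Finset.Icc 1 m, ((a : GaussianInt) + (b : GaussianInt) * Ig) ^ n

/-- Square Gaussian power sum `G_n(N) = F_n(N-1,N-1)`. -/
def Gg (n N : ℕ) : GaussianInt := Fg n (N - 1) (N - 1)

/-!
Put `π = p(1 + i)`. The reflection `z ↦ π - z` permutes the summation square, so for odd `n`
expanding `(π - z)ⁿ` expresses `2 Gₙ(p)` through lower sums with increasing powers of `π`. For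
`n = p` this leaves, modulo `p⁶`, only the terms with `G_{p-1}`, `G_{p-2}` and `G_{p-3}`.

Each of these reduces to the rational power sum `S_{p-3} = ∑ t^{p-3}` modulo a smaller power of
`p`: expanding `(a + bi)ⁿ` writes `Gₙ` in terms of products `Sⱼ S_{n-j}`, whose factors are
divisible by `p`, and by `p²` for odd index at least `3` (by the reflection `t ↦ p - t`). For
`G_{p-1}`, where `p - 1 ≡ 2 (mod 4)`, exchanging `a` and `b` moreover cancels all products with
even `j`. Finally Faulhaber's formula gives `S_{p-3} ≡ p B_{p-3} (mod p²)`.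
-/

open Finset

section Casts

variable {R : Type*} [CommRing R]

theorem natCast_pow_dvd_intCast {N k : ℕ} {z : ℤ}
    (h : (N : ℤ) ^ k ∣ z) : (N : R) ^ k ∣ z := by
  simpa using map_dvd (Int.castRingHom R) h

theorem factorial_mul_natCast_choose (n k : ℕ) :
    (k.factorial : R) * n.choose k = (descPochhammer R k).eval (n : R) := by
  rw [descPochhammer_eval_eq_descFactorial, Nat.descFactorial_eq_factorial_mul_choose,
    Nat.cast_mul]

end Casts

section Reflection

variable {ι R : Type*} [CommRing R] {s : Finset ι} {f : ι → R} {c : R} {n : ℕ}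

theorem two_mul_sum_pow_of_reflect (hn : Odd n)
    (hf : ∑ i ∈ s, (c - f i) ^ n = ∑ i ∈ s, f i ^ n) :
    2 * ∑ i ∈ s, f i ^ n =
      -∑ k ∈ range n, (-c) ^ (k + 1) * n.choose (k + 1) * ∑ i ∈ s, f i ^ (n - (k + 1)) := by
  have hneg : ∑ i ∈ s, (-c + f i) ^ n = -∑ i ∈ s, f i ^ n := by
    rw [← hf, ← sum_neg_distrib]
    exact sum_congr rfl fun i _ => by rw [← hn.neg_pow, neg_sub, neg_add_eq_sub]
  have hexpand : ∑ i ∈ s, (-c + f i) ^ n =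
      ∑ k ∈ range (n + 1), (-c) ^ k * n.choose k * ∑ i ∈ s, f i ^ (n - k) := by
    simp_rw [add_pow, mul_sum]
    rw [sum_comm]
    exact sum_congr rfl fun k _ => sum_congr rfl fun i _ => by ring
  rw [sum_range_succ', hneg] at hexpand
  simp only [pow_zero, Nat.choose_zero_right, Nat.cast_one, one_mul, Nat.sub_zero] at hexpand
  linear_combination -hexpand

theorem pow_three_dvd_two_mul_sum_pow_sub {d : R} (hn : Odd n)
    (hf : ∑ i ∈ s, (c - f i) ^ n = ∑ i ∈ s, f i ^ n) (hc : d ∣ c)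
    (hd : d ∣ ∑ i ∈ s, f i ^ (n - 2)) :
    d ^ 3 ∣ 2 * ∑ i ∈ s, f i ^ n - n * c * ∑ i ∈ s, f i ^ (n - 1) := by
  have hc' : d ∣ -c := dvd_neg.mpr hc
  have htail : d ^ 3 ∣ ∑ k ∈ Ico 1 n,
      (-c) ^ (k + 1) * n.choose (k + 1) * ∑ i ∈ s, f i ^ (n - (k + 1)) := by
    refine dvd_sum fun k hk => ?_
    obtain rfl | hk1 := eq_or_lt_of_le (mem_Ico.mp hk).1
    · exact pow_succ d 2 ▸ mul_dvd_mul ((pow_dvd_pow_of_dvd hc' 2).mul_right _) hd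
    · exact (((pow_dvd_pow d (by omega)).trans (pow_dvd_pow_of_dvd hc' _)).mul_right _).mul_right _
  rw [two_mul_sum_pow_of_reflect hn hf, ← sum_range_add_sum_Ico _ hn.pos, sum_range_one]
  convert htail.neg_right using 1
  simp only [zero_add, pow_one, Nat.choose_one_right]
  ring

theorem sum_Icc_pred_natCast_sub {M : Type*} [AddCommMonoid M] (g : R → M) (N : ℕ) :
    ∑ t ∈ Icc 1 (N - 1), g (N - t) = ∑ t ∈ Icc 1 (N - 1), g t := by
  have hreflect := sum_Ico_reflect (fun t : ℕ => g t) 1 N.le_succ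
  rw [Nat.add_sub_cancel_left, Nat.add_sub_cancel] at hreflect
  refine (sum_congr rfl fun t ht => ?_).trans hreflect
  rw [Nat.cast_sub ((mem_Icc.mp ht).2.trans (Nat.sub_le N 1))]

end Reflection

section Bernoulli

variable {p : ℕ} [hp : Fact p.Prime]

theorem norm_natCast_eq_one_of_lt {n : ℕ} (hn : n ≠ 0) (hnp : n < p) :
    ‖(n : ℚ_[p])‖ = 1 :=
  Padic.norm_natCast_eq_one_iff.mpr (Nat.coprime_of_lt_prime hn hnp hp.out)

theorem norm_bernoulli'_le_one {n : ℕ} (hn : n + 1 < p) :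
    ‖((bernoulli' n : ℚ) : ℚ_[p])‖ ≤ 1 := by
  induction n using Nat.strong_induction_on with
  | _ n ih =>
    rw [bernoulli'_def]
    push_cast
    rw [sub_eq_add_neg]
    refine (Padic.nonarchimedean _ _).trans (max_le (by simp) ?_)
    rw [norm_neg]
    refine IsUltrametricDist.norm_sum_le_of_forall_le_of_nonneg zero_le_one fun k hk => ?_
    rw [mem_range] at hk
    have hden : ‖(n : ℚ_[p]) - k + 1‖ = 1 := by
      have := norm_natCast_eq_one_of_lt (p := p) (n := n - k + 1) (by omega) (by omega)
      rwa [Nat.cast_succ, Nat.cast_sub hk.le] at this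
    rw [norm_mul, norm_div, hden, div_one]
    exact mul_le_one₀ (IsUltrametricDist.norm_natCast_le_one _ _) (norm_nonneg _)
      (ih k hk (by omega))

theorem norm_bernoulli_le_one {n : ℕ} (hn : n + 1 < p) :
    ‖((bernoulli n : ℚ) : ℚ_[p])‖ ≤ 1 := by
  simpa [bernoulli] using norm_bernoulli'_le_one hn

theorem Sps_pred_eq_sum_Ico (n N : ℕ) : Sps n (N - 1) = ∑ t ∈ Ico 1 N, (t : ℤ) ^ n := rfl

theorem Sps_pred_sub_mul_bernoulli {n : ℕ} (hn : n ≠ 0) (N : ℕ) :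
    (Sps n (N - 1) : ℚ) - N * bernoulli n =
      ∑ i ∈ range n, bernoulli i * (n + 1).choose i * (N : ℚ) ^ (n + 1 - i) / (n + 1) := by
  have hSps : (Sps n (N - 1) : ℚ) = ∑ k ∈ range N, (k : ℚ) ^ n := by
    rw [Sps_pred_eq_sum_Ico]
    cases N <;> simp [sum_range_eq_add_Ico, hn]
  rw [hSps, sum_range_pow, sum_range_succ, Nat.choose_succ_self_right, Nat.add_sub_cancel_left]
  push_cast
  field_simp
  ring

theorem norm_Sps_sub_mul_bernoulli_le {n : ℕ} (hn : n ≠ 0) (hnp : n + 1 < p) :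
    ‖(Sps n (p - 1) : ℚ_[p]) - p * (bernoulli n : ℚ)‖ ≤ (p : ℝ) ^ (-2 : ℤ) := by
  have hfaulhaber := congrArg (Rat.cast : ℚ → ℚ_[p]) (Sps_pred_sub_mul_bernoulli hn p)
  push_cast at hfaulhaber
  rw [hfaulhaber]
  refine IsUltrametricDist.norm_sum_le_of_forall_le_of_nonneg (by positivity) fun i hi => ?_
  rw [mem_range] at hi
  have hden : ‖(n : ℚ_[p]) + 1‖ = 1 := by
    exact_mod_cast norm_natCast_eq_one_of_lt (p := p) n.succ_ne_zero hnp
  rw [norm_div, hden, div_one, norm_mul, norm_mul, Padic.norm_p_pow]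
  have hcoeff := mul_le_one₀ (norm_bernoulli_le_one (p := p) (n := i) (by omega))
    (norm_nonneg _) (IsUltrametricDist.norm_natCast_le_one ℚ_[p] ((n + 1).choose i))
  refine (mul_le_of_le_one_left (by positivity) hcoeff).trans ?_
  exact zpow_le_zpow_right₀ (by exact_mod_cast hp.out.one_le) (by omega)

theorem norm_add_div_mul_bernoulli_le {m x c : ℤ} {k n : ℕ} (hm : ‖(m : ℚ_[p])‖ = 1)
    (hn : n ≠ 0) (hnp : n + 1 < p)
    (hdvd : (p : ℤ) ^ (k + 2) ∣ m * x + c * p ^ k * Sps n (p - 1)) :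
    ‖(x : ℚ_[p]) + p ^ (k + 1) / m * c * (bernoulli n : ℚ)‖ ≤ (p : ℝ) ^ (-(k + 2 : ℕ) : ℤ) := by
  have hm0 : (m : ℚ_[p]) ≠ 0 := norm_ne_zero_iff.mp (hm ▸ one_ne_zero)
  have hsplit : (m : ℚ_[p]) * (x + p ^ (k + 1) / m * c * (bernoulli n : ℚ)) =
      ((m * x + c * p ^ k * Sps n (p - 1) : ℤ) : ℚ_[p]) +
        -(c * (p ^ k * (Sps n (p - 1) - p * (bernoulli n : ℚ)))) := by
    push_cast
    field_simp
    ring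
  rw [← one_mul ‖_ + _‖, ← hm, ← norm_mul, hsplit]
  refine (Padic.nonarchimedean _ _).trans
    (max_le ((Padic.norm_int_le_pow_iff_dvd _ _).mpr (by exact_mod_cast hdvd)) ?_)
  rw [norm_neg, norm_mul, norm_mul, Padic.norm_p_pow]
  refine (mul_le_of_le_one_left (by positivity) (Padic.norm_int_le_one c)).trans ?_
  calc (p : ℝ) ^ (-(k : ℤ)) * ‖(Sps n (p - 1) : ℚ_[p]) - p * (bernoulli n : ℚ)‖
      ≤ (p : ℝ) ^ (-(k : ℤ)) * (p : ℝ) ^ (-2 : ℤ) := by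
        gcongr
        exact norm_Sps_sub_mul_bernoulli_le hn hnp
    _ = (p : ℝ) ^ (-(k + 2 : ℕ) : ℤ) := by
        rw [← zpow_add₀ (by exact_mod_cast hp.out.ne_zero)]
        congr 1
        push_cast
        ring

end Bernoulli

section PowerSums

variable {p n : ℕ} [hp : Fact p.Prime]

theorem prime_dvd_Sps (hn : n ≠ 0) (hnp : n + 1 < p) : (p : ℤ) ∣ Sps n (p - 1) := by
  have hB : ‖(p : ℚ_[p]) * (bernoulli n : ℚ)‖ ≤ (p : ℝ) ^ (-1 : ℤ) := by
    rw [norm_mul, Padic.norm_p, zpow_neg_one]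
    exact mul_le_of_le_one_right (by positivity) (norm_bernoulli_le_one hnp)
  have hS : ‖(Sps n (p - 1) : ℚ_[p])‖ ≤ (p : ℝ) ^ (-1 : ℤ) := by
    rw [← sub_add_cancel (Sps n (p - 1) : ℚ_[p]) (p * (bernoulli n : ℚ))]
    refine (Padic.nonarchimedean _ _).trans (max_le ?_ hB)
    exact (norm_Sps_sub_mul_bernoulli_le hn hnp).trans
      (zpow_le_zpow_right₀ (by exact_mod_cast hp.out.one_le) (by norm_num))
  simpa using (Padic.norm_int_le_pow_iff_dvd _ 1).mp (by exact_mod_cast hS)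

theorem prime_dvd_intCast_Sps {R : Type*} [CommRing R] (hn : n ≠ 0) (hnp : n + 1 < p) :
    (p : R) ∣ Sps n (p - 1) := by
  simpa only [pow_one] using
    natCast_pow_dvd_intCast (k := 1) ((pow_one (p : ℤ)).symm ▸ prime_dvd_Sps hn hnp)

theorem pow_three_dvd_two_mul_Sps_sub (hn : Odd n) (hn3 : 3 ≤ n) (hnp : n ≤ p) :
    (p : ℤ) ^ 3 ∣ 2 * Sps n (p - 1) - n * p * Sps (n - 1) (p - 1) :=
  pow_three_dvd_two_mul_sum_pow_sub hn (sum_Icc_pred_natCast_sub (· ^ n) p) dvd_rfl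
    (prime_dvd_Sps (by omega) (by omega))

theorem sq_dvd_Sps (hn : Odd n) (hn3 : 3 ≤ n) (hnp : n < p) :
    (p : ℤ) ^ 2 ∣ Sps n (p - 1) := by
  have hcoprime : IsCoprime ((p : ℤ) ^ 2) 2 :=
    (Nat.isCoprime_iff_coprime.mpr
      (Nat.coprime_of_lt_prime two_ne_zero (by omega) hp.out)).pow_left
  refine hcoprime.dvd_of_dvd_mul_left ((dvd_sub_left ?_).mp
    ((pow_dvd_pow _ (by norm_num)).trans (pow_three_dvd_two_mul_Sps_sub hn hn3 hnp.le)))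
  exact pow_two (p : ℤ) ▸
    mul_dvd_mul (Dvd.intro_left _ rfl) (prime_dvd_Sps (by omega) (by omega))

@[simp]
theorem Sps_zero (N : ℕ) : Sps 0 N = N := by simp [Sps]

theorem two_mul_Sps_one_pred (N : ℕ) : 2 * Sps 1 (N - 1) = N * (N - 1) := by
  have h : 2 * Sps 1 (N - 1) = N * ((N - 1 : ℕ) : ℤ) := by
    simpa [Sps] using
      two_mul_sum_pow_of_reflect odd_one (sum_Icc_pred_natCast_sub (R := ℤ) (· ^ 1) N)
  cases N <;> simp_all

end PowerSums

section GaussianPowerSums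

theorem Ig_sq : Ig ^ 2 = -1 := by
  rw [pow_two]
  ext <;> simp [Ig]

theorem intCast_dvd_mul_add_mul_one_sub_Ig {d m c : ℤ} {z : GaussianInt} :
    (d : GaussianInt) ∣ m * z + c * (1 - Ig) ↔ d ∣ m * z.re + c ∧ d ∣ m * z.im - c := by
  simp [Zsqrtd.intCast_dvd, Ig, sub_eq_add_neg]

theorem Ig_pow_eq_pow_mod (n : ℕ) : Ig ^ n = Ig ^ (n % 4) :=
  pow_eq_pow_mod n (by rw [show 4 = 2 * 2 from rfl, pow_mul, Ig_sq, neg_one_sq])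

theorem Fg_eq_sum (n k m : ℕ) :
    Fg n k m =
      ∑ j ∈ range (n + 1), (n.choose j : GaussianInt) * Ig ^ j * Sps j m * Sps (n - j) k := by
  have hterm (a b : ℕ) : ((a : GaussianInt) + b * Ig) ^ n =
      ∑ j ∈ range (n + 1), n.choose j * Ig ^ j * b ^ j * a ^ (n - j) := by
    rw [add_comm, add_pow]
    exact sum_congr rfl fun j _ => by ring
  simp_rw [Fg, hterm, Sps]
  rw [sum_congr rfl fun a _ => sum_comm, sum_comm]
  push_cast
  simp_rw [mul_sum, sum_mul]

theorem two_mul_Gg (n N : ℕ) :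
    2 * Gg n N = ∑ j ∈ range (n + 1), (n.choose j : GaussianInt) * (Ig ^ j + Ig ^ (n - j)) *
      Sps j (N - 1) * Sps (n - j) (N - 1) := by
  rw [two_mul, Gg, Fg_eq_sum]
  nth_rw 1 [← sum_flip]
  rw [← sum_add_distrib]
  refine sum_congr rfl fun j hj => ?_
  have hjn : j ≤ n := by rw [mem_range] at hj; omega
  rw [Nat.choose_symm hjn, Nat.sub_sub_self hjn]
  ring

theorem Gg_eq_sum_product (n N : ℕ) :
    Gg n N = ∑ x ∈ Icc 1 (N - 1) ×ˢ Icc 1 (N - 1), ((x.1 : GaussianInt) + x.2 * Ig) ^ n := by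
  rw [sum_product, Gg, Fg]

theorem sum_product_reflect (n N : ℕ) :
    ∑ x ∈ Icc 1 (N - 1) ×ˢ Icc 1 (N - 1),
        ((N : GaussianInt) * (1 + Ig) - (x.1 + x.2 * Ig)) ^ n =
      ∑ x ∈ Icc 1 (N - 1) ×ˢ Icc 1 (N - 1), ((x.1 : GaussianInt) + x.2 * Ig) ^ n := by
  simp_rw [sum_product]
  rw [← sum_Icc_pred_natCast_sub
    (fun a : GaussianInt => ∑ b ∈ Icc 1 (N - 1), (a + b * Ig) ^ n)]
  refine sum_congr rfl fun a _ => ?_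
  rw [← sum_Icc_pred_natCast_sub (fun b : GaussianInt => ((N : GaussianInt) - a + b * Ig) ^ n)]
  exact sum_congr rfl fun b _ => by ring

theorem two_mul_Gg_of_odd {n : ℕ} (hn : Odd n) (N : ℕ) :
    2 * Gg n N = -∑ k ∈ range n,
      (-((N : GaussianInt) * (1 + Ig))) ^ (k + 1) * n.choose (k + 1) * Gg (n - (k + 1)) N := by
  simp_rw [Gg_eq_sum_product]
  exact two_mul_sum_pow_of_reflect hn (sum_product_reflect n N)

variable {p n : ℕ} [hp : Fact p.Prime]

theorem sq_dvd_Gg_sub (hn : n ≠ 0) (hnp : n + 1 < p) :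
    (p : GaussianInt) ^ 2 ∣ Gg n p - (1 + Ig ^ n) * (p - 1) * Sps n (p - 1) := by
  have hends : ∑ j ∈ {0, n}, (n.choose j : GaussianInt) * Ig ^ j * Sps j (p - 1) *
      Sps (n - j) (p - 1) = (1 + Ig ^ n) * (p - 1) * Sps n (p - 1) := by
    rw [sum_pair hn.symm]
    simp only [Nat.choose_zero_right, Nat.choose_self, Nat.sub_zero, Nat.sub_self, Sps_zero]
    push_cast [Nat.cast_sub hp.out.one_le]
    ring
  rw [Gg, Fg_eq_sum, ← hends, ← sum_sdiff_eq_sub (by simp [insert_subset_iff])]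
  refine dvd_sum fun j hj => ?_
  simp only [mem_sdiff, mem_range, mem_insert, mem_singleton] at hj
  exact pow_two (p : GaussianInt) ▸ mul_dvd_mul
    ((prime_dvd_intCast_Sps (by omega) (by omega)).mul_left _)
    (prime_dvd_intCast_Sps (by omega) (by omega))

theorem prime_dvd_Gg (hn : n ≠ 0) (hnp : n + 1 < p) : (p : GaussianInt) ∣ Gg n p :=
  (dvd_sub_left ((prime_dvd_intCast_Sps hn hnp).mul_left _)).mp
    ((dvd_pow_self _ two_ne_zero).trans (sq_dvd_Gg_sub hn hnp))

theorem Ig_pow_add_Ig_pow_sub_eq_zero {j : ℕ} (hn : n % 4 = 2) (hj : Even j) (hjn : j ≤ n) :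
    Ig ^ j + Ig ^ (n - j) = 0 := by
  have hmod : j % 4 = 0 ∧ (n - j) % 4 = 2 ∨ j % 4 = 2 ∧ (n - j) % 4 = 0 := by
    rw [Nat.even_iff] at hj
    omega
  rw [Ig_pow_eq_pow_mod j, Ig_pow_eq_pow_mod (n - j)]
  rcases hmod with ⟨h, h'⟩ | ⟨h, h'⟩ <;> simp [h, h', Ig_sq]

theorem pow_four_dvd_two_mul_Gg_sub_Sps_one (hn : n % 4 = 2) (hn6 : 6 ≤ n) (hnp : n < p) :
    (p : GaussianInt) ^ 4 ∣
      2 * Gg n p - 4 * n * Ig * Sps 1 (p - 1) * Sps (n - 1) (p - 1) := by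
  have hends : ∑ j ∈ {1, n - 1}, (n.choose j : GaussianInt) * (Ig ^ j + Ig ^ (n - j)) *
      Sps j (p - 1) * Sps (n - j) (p - 1) =
        4 * n * Ig * Sps 1 (p - 1) * Sps (n - 1) (p - 1) := by
    have hIg : Ig ^ (n - 1) = Ig := by
      rw [Ig_pow_eq_pow_mod, show (n - 1) % 4 = 1 by omega, pow_one]
    rw [sum_pair (by omega), Nat.choose_symm (by omega), Nat.sub_sub_self (by omega), hIg,
      Nat.choose_one_right]
    ring
  rw [two_mul_Gg, ← hends, ← sum_sdiff_eq_sub (by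
    intro j hj
    simp only [mem_insert, mem_singleton] at hj
    rw [mem_range]
    omega)]
  refine dvd_sum fun j hj => ?_
  simp only [mem_sdiff, mem_range, mem_insert, mem_singleton] at hj
  rcases Nat.even_or_odd j with hj2 | hj2
  · rw [Ig_pow_add_Ig_pow_sub_eq_zero hn hj2 (by omega)]
    simp
  · have hj2' : Odd (n - j) := by grind
    have hj1 : 3 ≤ j ∧ 3 ≤ n - j := by grind
    rw [show (p : GaussianInt) ^ 4 = p ^ 2 * p ^ 2 by ring]
    exact mul_dvd_mul
      ((natCast_pow_dvd_intCast (sq_dvd_Sps hj2 hj1.1 (by omega))).mul_left _)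
      (natCast_pow_dvd_intCast (sq_dvd_Sps hj2' hj1.2 (by omega)))

theorem pow_four_dvd_two_mul_Gg_sub (hn : n % 4 = 2) (hn6 : 6 ≤ n) (hnp : n < p) :
    (p : GaussianInt) ^ 4 ∣
      2 * Gg n p - n * (n - 1) * p ^ 2 * (p - 1) * Ig * Sps (n - 2) (p - 1) := by
  have hS1 := congrArg (Int.cast : ℤ → GaussianInt) (two_mul_Sps_one_pred p)
  have hS := natCast_pow_dvd_intCast (R := GaussianInt)
    (pow_three_dvd_two_mul_Sps_sub (p := p) (n := n - 1) (by grind) (by omega) (by omega))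
  push_cast [Nat.cast_sub (show 1 ≤ n by omega)] at hS1 hS
  refine ((pow_four_dvd_two_mul_Gg_sub_Sps_one hn hn6 hnp).add
    ((pow_succ' (p : GaussianInt) 3 ▸ mul_dvd_mul_left _ hS).mul_left
      (n * (p - 1) * Ig))).trans (dvd_of_eq ?_)
  rw [show n - 1 - 1 = n - 2 from rfl]
  linear_combination -2 * n * Ig * Sps (n - 1) (p - 1) * hS1

theorem pow_three_dvd_two_mul_Gg_sub (hn : Odd n) (hn3 : 3 ≤ n) (hnp : n ≤ p) :
    (p : GaussianInt) ^ 3 ∣ 2 * Gg n p - n * (p * (1 + Ig)) * Gg (n - 1) p := by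
  have hdvd := prime_dvd_Gg (p := p) (n := n - 2) (by omega) (by omega)
  simp_rw [Gg_eq_sum_product] at hdvd ⊢
  exact pow_three_dvd_two_mul_sum_pow_sub hn (sum_product_reflect n p) (Dvd.intro _ rfl) hdvd

theorem pow_six_dvd_two_mul_Gg_self_sub (hp7 : 7 ≤ p) :
    (p : GaussianInt) ^ 6 ∣ 2 * Gg p p - (p * (p * (1 + Ig)) * Gg (p - 1) p -
      p.choose 2 * (p * (1 + Ig)) ^ 2 * Gg (p - 2) p +
      p.choose 3 * (p * (1 + Ig)) ^ 3 * Gg (p - 3) p) := by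
  have hpow (k : ℕ) : (p : GaussianInt) ^ k ∣ (-((p : GaussianInt) * (1 + Ig))) ^ k :=
    pow_dvd_pow_of_dvd (Dvd.intro _ rfl).neg_right k
  have htail : (p : GaussianInt) ^ 6 ∣ ∑ k ∈ Ico 3 p,
      (-((p : GaussianInt) * (1 + Ig))) ^ (k + 1) * p.choose (k + 1) * Gg (p - (k + 1)) p := by
    refine dvd_sum fun k hk => ?_
    rw [mem_Ico] at hk
    obtain hk5 | hk5 := le_or_gt 5 k
    · exact (((pow_dvd_pow _ (by omega)).trans (hpow _)).mul_right _).mul_right _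
    · have hchoose : (p : GaussianInt) ∣ p.choose (k + 1) :=
        Nat.cast_dvd_cast (hp.out.dvd_choose_self (by omega) (by omega))
      rw [show (p : GaussianInt) ^ 6 = p ^ 4 * p * p by ring]
      exact mul_dvd_mul (mul_dvd_mul ((pow_dvd_pow _ (by omega)).trans (hpow _)) hchoose)
        (prime_dvd_Gg (by omega) (by omega))
  rw [two_mul_Gg_of_odd (hp.out.odd_of_ne_two (by omega)),
    ← sum_range_add_sum_Ico _ (show 3 ≤ p by omega)]
  convert htail.neg_right using 1
  simp only [sum_range_succ, sum_range_zero, zero_add, Nat.choose_one_right, Nat.reduceAdd]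
  ring

theorem pow_six_dvd_twelve_mul_Gg_self_add (hp7 : 7 ≤ p) (h3 : p % 4 = 3) :
    (p : GaussianInt) ^ 6 ∣ 12 * Gg p p +
      (p - 1) ^ 2 * (p - 2) * p ^ 4 * Sps (p - 3) (p - 1) * (1 - Ig) := by
  have hchoose2 : 2 * (p.choose 2 : GaussianInt) = p * (p - 1) := by
    simpa [descPochhammer_succ_eval] using factorial_mul_natCast_choose (R := GaussianInt) p 2
  have hchoose3 : 6 * (p.choose 3 : GaussianInt) = p * (p - 1) * (p - 2) := by
    simpa [descPochhammer_succ_eval, Nat.factorial] using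
      factorial_mul_natCast_choose (R := GaussianInt) p 3
  have hp0 := pow_six_dvd_two_mul_Gg_self_sub hp7
  have hp1 := pow_four_dvd_two_mul_Gg_sub (p := p) (n := p - 1) (by omega) (by omega) (by omega)
  have hp2 := pow_three_dvd_two_mul_Gg_sub (p := p) (n := p - 2) (by grind) (by omega) (by omega)
  have hp3 := sq_dvd_Gg_sub (p := p) (n := p - 3) (by omega) (by omega)
  rw [Ig_pow_eq_pow_mod, show (p - 3) % 4 = 0 by omega] at hp3
  rw [Nat.sub_sub, Nat.cast_sub (by omega)] at hp1 hp2
  push_cast at hp1 hp2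
  -- `hp1`, `hp2` and `hp3` successively eliminate `G_{p-1}`, `G_{p-2}` and `G_{p-3}`; the
  -- multipliers are what `6 * hp0` calls for, simplified by `(1 + i) ^ 2 = 2 * i`.
  have hsum := (hp0.mul_left 6).add <|
    (dvd_mul_of_dvd_right (pow_add (p : GaussianInt) 2 4 ▸ mul_dvd_mul_left _ hp1)
      (3 * (1 + Ig))).add <|
    (dvd_mul_of_dvd_right (pow_add (p : GaussianInt) 3 3 ▸ mul_dvd_mul_left _ hp2)
      (-3 * (p - 1) * Ig)).add <|
    dvd_mul_of_dvd_right (pow_add (p : GaussianInt) 4 2 ▸ mul_dvd_mul_left _ hp3)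
      (-(p - 1) * (p - 2) * Ig * (1 + Ig))
  refine hsum.trans (dvd_of_eq ?_)
  linear_combination 3 * (p * (1 + Ig)) ^ 2 * Gg (p - 2) p * hchoose2 -
    (p * (1 + Ig)) ^ 3 * Gg (p - 3) p * hchoose3 +
    (p - 1) * p ^ 3 * (3 * Gg (p - 2) p - p * (p - 2) * (1 + Ig) * Gg (p - 3) p -
      p * (p - 1) * (p - 2) * Sps (p - 3) (p - 1)) * Ig_sq

theorem coprime_twelve (hp5 : 5 ≤ p) : p.Coprime 12 :=
  (Nat.Coprime.mul_right (Nat.coprime_of_lt_prime (by omega) (by omega) hp.out)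
    (Nat.coprime_of_lt_prime (by omega) (by omega) hp.out) : p.Coprime (3 * 4))

theorem pow_five_dvd_Gg_self (hp7 : 7 ≤ p) (h3 : p % 4 = 3) :
    (p : GaussianInt) ^ 5 ∣ Gg p p := by
  have hcoprime : IsCoprime ((p : GaussianInt) ^ 5) 12 := by
    exact_mod_cast ((coprime_twelve (p := p) (by omega)).cast (R := GaussianInt)).pow_left
  refine hcoprime.dvd_of_dvd_mul_left ((dvd_add_left ?_).mp
    ((pow_dvd_pow _ (by norm_num)).trans (pow_six_dvd_twelve_mul_Gg_self_add hp7 h3)))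
  exact (pow_succ (p : GaussianInt) 4 ▸ mul_dvd_mul (Dvd.intro_left _ rfl)
    (prime_dvd_intCast_Sps (by omega) (by omega))).mul_right _

end GaussianPowerSums

theorem stmt15 (p : ℕ) [Fact p.Prime] (hp7 : 7 ≤ p) (h3 : p % 4 = 3) :
    (‖(((Gg p p).re : ℚ_[p]) -
        (-((p : ℚ_[p]) ^ 5 / 12) * ((p : ℚ_[p]) - 1) ^ 2 * ((p : ℚ_[p]) - 2) *
          ((bernoulli (p - 3) : ℚ) : ℚ_[p])))‖ ≤ (p : ℝ) ^ (-(6 : ℤ)) ∧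
      ‖(((Gg p p).im : ℚ_[p]) +
        (-((p : ℚ_[p]) ^ 5 / 12) * ((p : ℚ_[p]) - 1) ^ 2 * ((p : ℚ_[p]) - 2) *
          ((bernoulli (p - 3) : ℚ) : ℚ_[p])))‖ ≤ (p : ℝ) ^ (-(6 : ℤ))) ∧
    (p : GaussianInt) ^ 5 ∣ Gg p p := by
  refine ⟨?_, pow_five_dvd_Gg_self hp7 h3⟩
  set c : ℤ := (p - 1) ^ 2 * (p - 2) with hc
  have h12 : ‖((12 : ℤ) : ℚ_[p])‖ = 1 := by
    exact_mod_cast Padic.norm_natCast_eq_one_iff.mpr (coprime_twelve (p := p) (by omega))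
  obtain ⟨hre, him⟩ : (p : ℤ) ^ 6 ∣ 12 * (Gg p p).re + c * p ^ 4 * Sps (p - 3) (p - 1) ∧
      (p : ℤ) ^ 6 ∣ 12 * (Gg p p).im - c * p ^ 4 * Sps (p - 3) (p - 1) := by
    rw [← intCast_dvd_mul_add_mul_one_sub_Ig]
    exact_mod_cast pow_six_dvd_twelve_mul_Gg_self_add hp7 h3
  rw [sub_eq_add_neg, ← neg_mul, ← neg_mul] at him
  constructor
  · convert norm_add_div_mul_bernoulli_le h12 (by omega) (by omega) hre using 2 <;>
      push_cast [hc]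
    ring
  · convert norm_add_div_mul_bernoulli_le h12 (by omega) (by omega) him using 2 <;>
      push_cast [hc]
    ring
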